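/- arXiv:2502.18575 — 4 statements merged into one kernel-verified Lean document; each statement's English description precedes it below -/
import Mathlib

section
/- Let G₁ = R ⊗ I₃ and G₂ = I₃ ⊗ R be the 27×27 matrices over K obtained by Kronecker product of the nineteen-vertex braided R-matrix with the 3×3 identity matrix. Then G₁·G₂·G₁ = G₂·G₁·G₂, i.e., the matrices G₁, G₂ satisfy the braid relation and hence furnish a representation of the three-strand braid group B₃. -/
open Matrix Kronecker

set_option synthInstance.maxHeartbeats 1000000
set_option maxHeartbeats 1000000

noncomputable section

/-- The ground field `K = ℚ(t)` of rational functions in one variable over `ℚ`. -/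
abbrev K : Type := RatFunc ℚ

/-- The variable `t`, a square root of `q`. -/
def t : K := RatFunc.X

/-- `q = t²`. -/
def q : K := t ^ 2

/-- Kronecker product of square matrices, flattened with the lexicographic
(row-major) index ordering: the pair `(i, j)` corresponds to position `i * n + j`. -/
def kron {m n : ℕ} (A : Matrix (Fin m) (Fin m) K) (B : Matrix (Fin n) (Fin n) K) :
    Matrix (Fin (m * n)) (Fin (m * n)) K :=
  Matrix.reindex finProdFinEquiv finProdFinEquiv (A ⊗ₖ B)

/-- The braided R-matrix of the three-state (nineteen-vertex) model, with rows and
columns indexed by pairs `(i,j) ∈ {1,2,3}²` in lexicographic order; here `-q`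
represents `-q`, and `-t + t⁵` represents `-q^{1/2} + q^{5/2}`. -/
def R : Matrix (Fin 9) (Fin 9) K :=
  !![1,  0,    0,    0,        0,            0,  0,            0,        0;
     0,  0,    0,    -q,       0,            0,  0,            0,        0;
     0,  0,    0,    0,        0,            0,  q ^ 2,        0,        0;
     0, -q,    0,    1 - q ^ 2, 0,           0,  0,            0,        0;
     0,  0,    0,    0,        q,            0,  -t + t ^ 5,   0,        0;
     0,  0,    0,    0,        0,            0,  0,            -q,       0;
     0,  0,    q ^ 2, 0,       -t + t ^ 5,   0,  1 - q - q ^ 2 + q ^ 3, 0, 0;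
     0,  0,    0,    0,        0,            -q, 0,            1 - q ^ 2, 0;
     0,  0,    0,    0,        0,            0,  0,            0,        1]

/-- The action of the nineteen-vertex R-matrix on column vectors, written with its nonzero
entries only, over an arbitrary commutative ring and with parameter `s` in place of `t`. -/
def rAct {A : Type*} [CommRing A] (s : A) (w : Fin 9 → A) : Fin 9 → A :=
  ![w 0,
    -s ^ 2 * w 3,
    s ^ 4 * w 6,
    -s ^ 2 * w 1 + (1 - s ^ 4) * w 3,
    s ^ 2 * w 4 + (-s + s ^ 5) * w 6,
    -s ^ 2 * w 7,
    s ^ 4 * w 2 + (-s + s ^ 5) * w 4 + (1 - s ^ 2 - s ^ 4 + s ^ 6) * w 6,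
    -s ^ 2 * w 5 + (1 - s ^ 4) * w 7,
    w 8]

/-- The action of `R ⊗ I₃` on column vectors. -/
def leftAct {A : Type*} [CommRing A] (s : A) (v : Fin 27 → A) (i : Fin 27) : A :=
  rAct s (fun j => v (finProdFinEquiv (m := 9) (n := 3) (j, i.modNat (m := 9) (n := 3))))
    (i.divNat (m := 9) (n := 3))

/-- The action of `I₃ ⊗ R` on column vectors. -/
def rightAct {A : Type*} [CommRing A] (s : A) (v : Fin 27 → A) (i : Fin 27) : A :=
  rAct s (fun j => v (finProdFinEquiv (m := 3) (n := 9) (i.divNat (m := 3) (n := 9), j)))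
    (i.modNat (m := 3) (n := 9))

theorem R_mulVec (w : Fin 9 → K) : R *ᵥ w = rAct t w := by
  have hq : q = t ^ 2 := rfl
  funext i
  rw [Matrix.mulVec, dotProduct]
  fin_cases i <;> simp [R, rAct, Fin.sum_univ_succ, hq, ← pow_mul, add_assoc]

theorem kron_one_mulVec {m n : ℕ} (A : Matrix (Fin m) (Fin m) K) (v : Fin (m * n) → K)
    (i : Fin (m * n)) :
    (kron A (1 : Matrix (Fin n) (Fin n) K) *ᵥ v) i =
      (A *ᵥ fun j => v (finProdFinEquiv (j, i.modNat))) i.divNat := by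
  simp only [Matrix.mulVec, dotProduct, kron]
  rw [← finProdFinEquiv.sum_comp, Fintype.sum_prod_type]
  simp [Matrix.one_apply]

theorem one_kron_mulVec {m n : ℕ} (A : Matrix (Fin n) (Fin n) K) (v : Fin (m * n) → K)
    (i : Fin (m * n)) :
    (kron (1 : Matrix (Fin m) (Fin m) K) A *ᵥ v) i =
      (A *ᵥ fun j => v (finProdFinEquiv (i.divNat, j))) i.modNat := by
  simp only [Matrix.mulVec, dotProduct, kron]
  rw [← finProdFinEquiv.sum_comp, Fintype.sum_prod_type_right]
  simp [Matrix.one_apply]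

theorem leftAct_eq {A : Type*} [CommRing A] (s : A) (v : Fin 27 → A) :
    leftAct s v =
      ![v 0,
        v 1,
        v 2,
        -s ^ 2 * v 9,
        -s ^ 2 * v 10,
        -s ^ 2 * v 11,
        s ^ 4 * v 18,
        s ^ 4 * v 19,
        s ^ 4 * v 20,
        -s ^ 2 * v 3 + (1 - s ^ 4) * v 9,
        -s ^ 2 * v 4 + (1 - s ^ 4) * v 10,
        -s ^ 2 * v 5 + (1 - s ^ 4) * v 11,
        s ^ 2 * v 12 + (-s + s ^ 5) * v 18,
        s ^ 2 * v 13 + (-s + s ^ 5) * v 19,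
        s ^ 2 * v 14 + (-s + s ^ 5) * v 20,
        -s ^ 2 * v 21,
        -s ^ 2 * v 22,
        -s ^ 2 * v 23,
        s ^ 4 * v 6 + (-s + s ^ 5) * v 12 + (1 - s ^ 2 - s ^ 4 + s ^ 6) * v 18,
        s ^ 4 * v 7 + (-s + s ^ 5) * v 13 + (1 - s ^ 2 - s ^ 4 + s ^ 6) * v 19,
        s ^ 4 * v 8 + (-s + s ^ 5) * v 14 + (1 - s ^ 2 - s ^ 4 + s ^ 6) * v 20,
        -s ^ 2 * v 15 + (1 - s ^ 4) * v 21,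
        -s ^ 2 * v 16 + (1 - s ^ 4) * v 22,
        -s ^ 2 * v 17 + (1 - s ^ 4) * v 23,
        v 24,
        v 25,
        v 26] := by
  funext i
  fin_cases i <;> rfl

theorem rightAct_eq {A : Type*} [CommRing A] (s : A) (v : Fin 27 → A) :
    rightAct s v =
      ![v 0,
        -s ^ 2 * v 3,
        s ^ 4 * v 6,
        -s ^ 2 * v 1 + (1 - s ^ 4) * v 3,
        s ^ 2 * v 4 + (-s + s ^ 5) * v 6,
        -s ^ 2 * v 7,
        s ^ 4 * v 2 + (-s + s ^ 5) * v 4 + (1 - s ^ 2 - s ^ 4 + s ^ 6) * v 6,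
        -s ^ 2 * v 5 + (1 - s ^ 4) * v 7,
        v 8,
        v 9,
        -s ^ 2 * v 12,
        s ^ 4 * v 15,
        -s ^ 2 * v 10 + (1 - s ^ 4) * v 12,
        s ^ 2 * v 13 + (-s + s ^ 5) * v 15,
        -s ^ 2 * v 16,
        s ^ 4 * v 11 + (-s + s ^ 5) * v 13 + (1 - s ^ 2 - s ^ 4 + s ^ 6) * v 15,
        -s ^ 2 * v 14 + (1 - s ^ 4) * v 16,
        v 17,
        v 18,
        -s ^ 2 * v 21,
        s ^ 4 * v 24,
        -s ^ 2 * v 19 + (1 - s ^ 4) * v 21,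
        s ^ 2 * v 22 + (-s + s ^ 5) * v 24,
        -s ^ 2 * v 25,
        s ^ 4 * v 20 + (-s + s ^ 5) * v 22 + (1 - s ^ 2 - s ^ 4 + s ^ 6) * v 24,
        -s ^ 2 * v 23 + (1 - s ^ 4) * v 25,
        v 26] := by
  funext i
  fin_cases i <;> rfl

theorem leftAct_rightAct_braid {A : Type*} [CommRing A] (s : A) (v : Fin 27 → A) :
    leftAct s (rightAct s (leftAct s v)) = rightAct s (leftAct s (rightAct s v)) := by
  rw [leftAct_eq s v, rightAct_eq s v, rightAct_eq, leftAct_eq, leftAct_eq, rightAct_eq]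
  simp only [Matrix.cons_val]
  funext i
  fin_cases i <;> simp only [Fin.reduceFinMk, Matrix.cons_val] <;> ring

/-- the 27×27 matrices `G₁ = R ⊗ I₃` and `G₂ = I₃ ⊗ R` satisfy the braid
relation `G₁·G₂·G₁ = G₂·G₁·G₂`, hence furnish a representation of the three-strand
braid group `B₃`. -/
theorem braid_relation_nineteen_vertex :
    kron R (1 : Matrix (Fin 3) (Fin 3) K) * kron (1 : Matrix (Fin 3) (Fin 3) K) R *
        kron R (1 : Matrix (Fin 3) (Fin 3) K) =
      kron (1 : Matrix (Fin 3) (Fin 3) K) R * kron R (1 : Matrix (Fin 3) (Fin 3) K) *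
        kron (1 : Matrix (Fin 3) (Fin 3) K) R := by
  have hl (v : Fin 27 → K) : kron R (1 : Matrix (Fin 3) (Fin 3) K) *ᵥ v = leftAct t v := by
    funext i
    exact (kron_one_mulVec R v i).trans (congrFun (R_mulVec _) _)
  have hr (v : Fin 27 → K) : kron (1 : Matrix (Fin 3) (Fin 3) K) R *ᵥ v = rightAct t v := by
    funext i
    exact (one_kron_mulVec (m := 3) R v i).trans (congrFun (R_mulVec _) _)
  refine Matrix.ext_of_mulVec_single fun i => ?_
  rw [← Matrix.mulVec_mulVec, ← Matrix.mulVec_mulVec, ← Matrix.mulVec_mulVec,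
    ← Matrix.mulVec_mulVec]
  generalize (Pi.single i 1 : Fin 27 → K) = v
  have h := leftAct_rightAct_braid t v
  rw [← hl v, ← hr v, ← hr, ← hl, ← hl, ← hr] at h
  exact h
end
end

section
/- The nineteen-vertex braided R-matrix satisfies the cubic (skein) relation (R − I₉)(R + q²·I₉)(R − q³·I₉) = 0; that is, the eigenvalues of R are among 1, −q², q³. In particular R is invertible over K. -/
open Matrix

set_option synthInstance.maxHeartbeats 1000000
set_option maxHeartbeats 1000000

noncomputable section

/-- The nineteen-vertex R-matrix with parameter `s` in an arbitrary commutative ring. -/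
def nineteenVertexMatrix {F : Type*} [CommRing F] (s : F) : Matrix (Fin 9) (Fin 9) F :=
  !![1, 0, 0, 0, 0, 0, 0, 0, 0;
     0, 0, 0, -s ^ 2, 0, 0, 0, 0, 0;
     0, 0, 0, 0, 0, 0, s ^ 4, 0, 0;
     0, -s ^ 2, 0, 1 - s ^ 4, 0, 0, 0, 0, 0;
     0, 0, 0, 0, s ^ 2, 0, -s + s ^ 5, 0, 0;
     0, 0, 0, 0, 0, 0, 0, -s ^ 2, 0;
     0, 0, s ^ 4, 0, -s + s ^ 5, 0, 1 - s ^ 2 - s ^ 4 + s ^ 6, 0, 0;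
     0, 0, 0, 0, 0, -s ^ 2, 0, 1 - s ^ 4, 0;
     0, 0, 0, 0, 0, 0, 0, 0, 1]

theorem R_eq_nineteenVertexMatrix : R = nineteenVertexMatrix t := by
  simp only [R, nineteenVertexMatrix, q, ← pow_mul, Nat.reduceMul]

theorem nineteenVertexMatrix_cubic {F : Type*} [CommRing F] (s : F) :
    (nineteenVertexMatrix s - 1) *
        (nineteenVertexMatrix s + s ^ 4 • (1 : Matrix (Fin 9) (Fin 9) F)) *
        (nineteenVertexMatrix s - s ^ 6 • (1 : Matrix (Fin 9) (Fin 9) F)) = 0 := by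
  ext i j
  fin_cases i <;> fin_cases j <;>
    simp [nineteenVertexMatrix, Matrix.mul_apply, Fin.sum_univ_succ, Matrix.one_apply] <;> ring

/-- A root of `(X - 1) (X + a) (X - b)` with `a b ≠ 0` is invertible. -/
theorem isUnit_of_cubic_eq_zero {F A : Type*} [Field F] [Ring A] [Algebra F A] {r : A} {a b : F}
    (ha : a ≠ 0) (hb : b ≠ 0) (h : (r - 1) * (r + a • (1 : A)) * (r - b • (1 : A)) = 0) :
    IsUnit r := by
  have key : r * (r * r + (a - b - 1) • r + (b - a - a * b) • (1 : A)) = (-(a * b)) • (1 : A) := by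
    rw [← sub_eq_zero, ← h]
    simp only [mul_add, add_mul, mul_sub, sub_mul, smul_mul_assoc, mul_smul_comm, mul_one, one_mul,
      mul_assoc]
    module
  have hab : -(a * b) ≠ 0 := neg_ne_zero.mpr (mul_ne_zero ha hb)
  have hcomm : Commute r (r * r + (a - b - 1) • r + (b - a - a * b) • (1 : A)) :=
    (((Commute.refl r).mul_right (Commute.refl r)).add_right
      ((Commute.refl r).smul_right _)).add_right ((Commute.one_right r).smul_right _)
  refine (hcomm.isUnit_mul_iff.mp ?_).1
  rw [key, ← Algebra.algebraMap_eq_smul_one]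
  exact (IsUnit.mk0 _ hab).map (algebraMap F A)

/-- the nineteen-vertex braided R-matrix satisfies the cubic (skein)
relation `(R − I₉)(R + q²·I₉)(R − q³·I₉) = 0`; that is, the eigenvalues of `R` are
among `1, −q², q³`. In particular `R` is invertible over `K`. -/
theorem nineteen_vertex_skein_relation :
    (R - 1) * (R + q ^ 2 • (1 : Matrix (Fin 9) (Fin 9) K)) *
        (R - q ^ 3 • (1 : Matrix (Fin 9) (Fin 9) K)) = 0 ∧
    IsUnit R := by
  have cubic : (R - 1) * (R + q ^ 2 • (1 : Matrix (Fin 9) (Fin 9) K)) *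
      (R - q ^ 3 • (1 : Matrix (Fin 9) (Fin 9) K)) = 0 := by
    simpa only [R_eq_nineteenVertexMatrix, q, ← pow_mul] using nineteenVertexMatrix_cubic t
  have hq : q ≠ 0 := pow_ne_zero 2 RatFunc.X_ne_zero
  exact ⟨cubic, isUnit_of_cubic_eq_zero (pow_ne_zero 2 hq) (pow_ne_zero 3 hq) cubic⟩
end
end

section
/- Markov move II (stabilization) property of the nineteen-vertex Markov trace: the 27×27 matrix I₃ ⊗ R is invertible over K, and for every 9×9 matrix M over K one has Tr((h⊗h⊗h)·(M ⊗ I₃)·(I₃ ⊗ R)) = (1/(1+q+q²))·Tr((h⊗h)·M) and Tr((h⊗h⊗h)·(M ⊗ I₃)·(I₃ ⊗ R)⁻¹) = (q²/(1+q+q²))·Tr((h⊗h)·M). In the notation of the Akutsu–Wadati construction, φ(A·Gₙ) = τ·φ(A) and φ(A·Gₙ⁻¹) = τ̄·φ(A) with τ = 1/(1+q+q²) and τ̄ = q²/(1+q+q²). -/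
open Matrix Kronecker

set_option synthInstance.maxHeartbeats 1000000
set_option maxHeartbeats 1000000

noncomputable section

/-- The weight matrix `h = (1/(1+q+q²))·diag(1, q, q²)`. -/
def h : Matrix (Fin 3) (Fin 3) K :=
  (1 + q + q ^ 2)⁻¹ • !![1, 0, 0; 0, q, 0; 0, 0, q ^ 2]

theorem q_ne_zero : q ≠ 0 := pow_ne_zero 2 RatFunc.X_ne_zero

theorem kron_mul_kron {m n : ℕ} (A A' : Matrix (Fin m) (Fin m) K)
    (B B' : Matrix (Fin n) (Fin n) K) :
    kron A B * kron A' B' = kron (A * A') (B * B') := by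
  simp only [kron, reindex_apply, submatrix_mul_equiv, mul_kronecker_mul]

theorem kron_one_one {m n : ℕ} :
    kron (1 : Matrix (Fin m) (Fin m) K) (1 : Matrix (Fin n) (Fin n) K) = 1 := by
  simp [kron]

theorem kron_apply {m n : ℕ} (A : Matrix (Fin m) (Fin m) K) (B : Matrix (Fin n) (Fin n) K)
    (p r : Fin m × Fin n) :
    kron A B (finProdFinEquiv p) (finProdFinEquiv r) = A p.1 r.1 * B p.2 r.2 := by
  simp [kron]

/-- The inverse of the braided R-matrix. -/
def RInv : Matrix (Fin 9) (Fin 9) K :=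
  !![1, 0, 0, 0, 0, 0, 0, 0, 0;
     0, 1 - q⁻¹ ^ 2, 0, -q⁻¹, 0, 0, 0, 0, 0;
     0, 0, (1 - q) * (1 - q ^ 2) * q⁻¹ ^ 3, 0, (t - t ^ 5) * q⁻¹ ^ 3, 0, q⁻¹ ^ 2, 0, 0;
     0, -q⁻¹, 0, 0, 0, 0, 0, 0, 0;
     0, 0, (t - t ^ 5) * q⁻¹ ^ 3, 0, q⁻¹, 0, 0, 0, 0;
     0, 0, 0, 0, 0, 1 - q⁻¹ ^ 2, 0, -q⁻¹, 0;
     0, 0, q⁻¹ ^ 2, 0, 0, 0, 0, 0, 0;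
     0, 0, 0, 0, 0, -q⁻¹, 0, 0, 0;
     0, 0, 0, 0, 0, 0, 0, 0, 1]

theorem R_mul_RInv : R * RInv = 1 := by
  have hq := q_ne_zero
  have ht : t ^ 2 = q := rfl
  ext i j
  fin_cases i <;> fin_cases j <;>
    simp [R, RInv, Matrix.mul_apply, Fin.sum_univ_succ, hq] <;>
    field_simp <;> grind

theorem kron_one_R_mul_kron_one_RInv :
    kron (1 : Matrix (Fin 3) (Fin 3) K) R * kron (1 : Matrix (Fin 3) (Fin 3) K) RInv = 1 := by
  rw [kron_mul_kron, R_mul_RInv, one_mul, kron_one_one]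

/-- If the partial trace of `X`, weighted by `w`, over the last tensor factor is the scalar `κ`,
then `1 ⊗ X` contributes the factor `κ` to the trace against `N ⊗ w`. -/
theorem trace_kron_mul_kron_one (w : Matrix (Fin 3) (Fin 3) K)
    (X : Matrix (Fin 9) (Fin 9) K) (κ : K)
    (hX : ∀ b b' : Fin 3, ∑ c, ∑ c', w c c' *
      X (finProdFinEquiv (m := 3) (n := 3) (b', c')) (finProdFinEquiv (m := 3) (n := 3) (b, c)) =
        if b' = b then κ else 0)
    (N : Matrix (Fin 9) (Fin 9) K) :
    trace (kron N w * kron (1 : Matrix (Fin 3) (Fin 3) K) X) = κ * trace N := by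
  have assoc (a b c : Fin 3) :
      (finProdFinEquiv (m := 9) (n := 3) (finProdFinEquiv (m := 3) (n := 3) (a, b), c) : Fin 27) =
        finProdFinEquiv (m := 3) (n := 9) (a, finProdFinEquiv (m := 3) (n := 3) (b, c)) := by
    revert a b c; decide
  let e : (Fin 3 × Fin 3) × Fin 3 ≃ Fin 27 :=
    ((finProdFinEquiv (m := 3) (n := 3)).prodCongr (Equiv.refl _)).trans
      (finProdFinEquiv (m := 9) (n := 3))
  have hN (a b c a' b' c' : Fin 3) : (kron N w : Matrix (Fin 27) (Fin 27) K)
      (e ((a, b), c)) (e ((a', b'), c')) =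
      N (finProdFinEquiv (m := 3) (n := 3) (a, b)) (finProdFinEquiv (m := 3) (n := 3) (a', b')) *
        w c c' :=
    kron_apply N w (_, c) (_, c')
  have hXe (a b c a' b' c' : Fin 3) :
      (kron (1 : Matrix (Fin 3) (Fin 3) K) X : Matrix (Fin 27) (Fin 27) K)
        (e ((a', b'), c')) (e ((a, b), c)) =
      (if a' = a then 1 else 0) * X (finProdFinEquiv (m := 3) (n := 3) (b', c'))
        (finProdFinEquiv (m := 3) (n := 3) (b, c)) := by
    have h₁ : e ((a', b'), c') = _ := assoc a' b' c'
    have h₂ : e ((a, b), c) = _ := assoc a b c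
    rw [h₁, h₂, ← Matrix.one_apply]
    exact kron_apply 1 X (a', _) (a, _)
  change ∑ i : Fin 27, ∑ j : Fin 27, (kron N w : Matrix (Fin 27) (Fin 27) K) i j *
    (kron (1 : Matrix (Fin 3) (Fin 3) K) X : Matrix (Fin 27) (Fin 27) K) j i = κ * ∑ i, N i i
  rw [← e.sum_comp, ← (finProdFinEquiv (m := 3) (n := 3)).sum_comp (fun i => N i i)]
  simp_rw [← e.sum_comp, Fintype.sum_prod_type, hN, hXe, Finset.mul_sum]
  refine Finset.sum_congr rfl fun a _ => Finset.sum_congr rfl fun b _ => ?_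
  calc _ = ∑ b', N (finProdFinEquiv (m := 3) (n := 3) (a, b))
          (finProdFinEquiv (m := 3) (n := 3) (a, b')) * ∑ c, ∑ c', w c c' *
        X (finProdFinEquiv (m := 3) (n := 3) (b', c'))
          (finProdFinEquiv (m := 3) (n := 3) (b, c)) := by
        simp_rw [Finset.mul_sum]
        rw [Finset.sum_comm (s := (Finset.univ : Finset (Fin 3)))]
        rw [Finset.sum_eq_single a (fun a' _ ha => by simp [ha]) (by simp), Finset.sum_comm]
        simp [mul_assoc]
    _ = _ := by simp [hX, mul_comm]

theorem trace_weighted_mul (X : Matrix (Fin 9) (Fin 9) K) (κ : K)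
    (hX : ∀ b b' : Fin 3, ∑ c, ∑ c', h c c' *
      X (finProdFinEquiv (m := 3) (n := 3) (b', c')) (finProdFinEquiv (m := 3) (n := 3) (b, c)) =
        if b' = b then κ else 0)
    (M : Matrix (Fin 9) (Fin 9) K) :
    trace (kron (kron h h) h * (kron M (1 : Matrix (Fin 3) (Fin 3) K) *
      kron (1 : Matrix (Fin 3) (Fin 3) K) X)) = κ * trace (kron h h * M) := by
  rw [← trace_kron_mul_kron_one h X κ hX (kron h h * M)]
  have hmul := kron_mul_kron (kron h h) M h 1
  rw [mul_one] at hmul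
  rw [← hmul]
  exact congrArg trace (Matrix.mul_assoc _ _ _).symm

theorem partial_trace_R (b b' : Fin 3) : ∑ c, ∑ c', h c c' *
    R (finProdFinEquiv (m := 3) (n := 3) (b', c')) (finProdFinEquiv (m := 3) (n := 3) (b, c)) =
      if b' = b then (1 + q + q ^ 2)⁻¹ else 0 := by
  fin_cases b <;> fin_cases b' <;>
    simp [Fin.sum_univ_succ, h, R, finProdFinEquiv] <;> ring

theorem partial_trace_RInv (b b' : Fin 3) : ∑ c, ∑ c', h c c' *
    RInv (finProdFinEquiv (m := 3) (n := 3) (b', c')) (finProdFinEquiv (m := 3) (n := 3) (b, c)) =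
      if b' = b then q ^ 2 / (1 + q + q ^ 2) else 0 := by
  have hq := q_ne_zero
  fin_cases b <;> fin_cases b' <;>
    simp [Fin.sum_univ_succ, h, RInv, finProdFinEquiv] <;> field_simp <;> ring

/-- Markov move II (stabilization) property of the nineteen-vertex
Markov trace: the 27×27 matrix `I₃ ⊗ R` is invertible over `K`, and for every 9×9
matrix `M` over `K` one has
`Tr((h⊗h⊗h)·(M ⊗ I₃)·(I₃ ⊗ R)) = (1/(1+q+q²))·Tr((h⊗h)·M)` and
`Tr((h⊗h⊗h)·(M ⊗ I₃)·(I₃ ⊗ R)⁻¹) = (q²/(1+q+q²))·Tr((h⊗h)·M)`; i.e.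
`φ(A·Gₙ) = τ·φ(A)` and `φ(A·Gₙ⁻¹) = τ̄·φ(A)` with `τ = 1/(1+q+q²)`,
`τ̄ = q²/(1+q+q²)`. -/
theorem markov_move_II_nineteen_vertex :
    IsUnit (kron (1 : Matrix (Fin 3) (Fin 3) K) R) ∧
    ∀ M : Matrix (Fin 9) (Fin 9) K,
      Matrix.trace (kron (kron h h) h * (kron M (1 : Matrix (Fin 3) (Fin 3) K) *
          kron (1 : Matrix (Fin 3) (Fin 3) K) R)) =
        (1 + q + q ^ 2)⁻¹ * Matrix.trace (kron h h * M) ∧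
      Matrix.trace (kron (kron h h) h * (kron M (1 : Matrix (Fin 3) (Fin 3) K) *
          (kron (1 : Matrix (Fin 3) (Fin 3) K) R)⁻¹)) =
        (q ^ 2 / (1 + q + q ^ 2)) * Matrix.trace (kron h h * M) := by
  have hinv := kron_one_R_mul_kron_one_RInv
  refine ⟨(isUnit_iff_isUnit_det _).2 (isUnit_det_of_right_inverse hinv), fun M => ⟨?_, ?_⟩⟩
  · exact trace_weighted_mul R _ partial_trace_R M
  · rw [inv_eq_right_inv hinv]
    exact trace_weighted_mul RInv _ partial_trace_RInv M
end
end

section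
/- Vertex-model computation of the adjoint (3-colored) Jones polynomial of the trefoil knot (the closure of the two-strand braid b₁³): over K one has q²·(1+q+q²)·Tr((h ⊗ h)·R³) = q²·(1 + q³ − q⁵ + q⁶ − q⁷ − q⁸ + q⁹), where the left-hand side is the Akutsu–Wadati invariant α(b₁³) = (ττ̄)^{−1/2}(τ̄/τ)^{3/2}·Tr((h⊗h)·R³) with τ = 1/(1+q+q²), τ̄ = q²/(1+q+q²). -/
open Matrix Kronecker

set_option synthInstance.maxHeartbeats 1000000
set_option maxHeartbeats 1000000

noncomputable section

/-- The denominator of the weight matrix does not vanish in `ℚ(t)`. -/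
lemma one_add_q_add_q_sq_ne_zero : 1 + q + q ^ 2 ≠ 0 := by
  have hp : (1 + Polynomial.X ^ 2 + (Polynomial.X ^ 2) ^ 2 : Polynomial ℚ) ≠ 0 := by
    intro hzero
    simpa using congrArg (Polynomial.eval 0) hzero
  simpa [q, t] using RatFunc.algebraMap_ne_zero hp

/-- The Kronecker square of the weight matrix is diagonal. -/
lemma kron_h_h : kron h h = Matrix.diagonal
    (((1 + q + q ^ 2)⁻¹ ^ 2) •
      ![1, q, q ^ 2, q, q ^ 2, q ^ 3, q ^ 2, q ^ 3, q ^ 4] : Fin 9 → K) := by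
  have h_diag : h = Matrix.diagonal ((1 + q + q ^ 2)⁻¹ • ![1, q, q ^ 2]) := by
    ext i j
    fin_cases i <;> fin_cases j <;> simp [h]
  rw [kron, h_diag, Matrix.diagonal_kronecker_diagonal, Matrix.reindex_apply,
    Matrix.submatrix_diagonal_equiv]
  generalize (1 + q + q ^ 2)⁻¹ = c
  congr 1
  ext i
  fin_cases i <;>
    simp [finProdFinEquiv, Fin.divNat, Fin.modNat] <;> ring

/-- The square of the R-matrix. -/
lemma R_sq : R ^ 2 =
    !![1, 0, 0, 0, 0, 0, 0, 0, 0;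
       0, q ^ 2, 0, -q * (1 - q ^ 2), 0, 0, 0, 0, 0;
       0, 0, q ^ 4, 0, q ^ 2 * (-t + t ^ 5), 0, q ^ 2 * (1 - q - q ^ 2 + q ^ 3), 0, 0;
       0, -q * (1 - q ^ 2), 0, q ^ 2 + (1 - q ^ 2) ^ 2, 0, 0, 0, 0, 0;
       0, 0, q ^ 2 * (-t + t ^ 5), 0, q ^ 2 + (-t + t ^ 5) ^ 2, 0,
         (-t + t ^ 5) * (1 - q ^ 2 + q ^ 3), 0, 0;
       0, 0, 0, 0, 0, q ^ 2, 0, -q * (1 - q ^ 2), 0;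
       0, 0, q ^ 2 * (1 - q - q ^ 2 + q ^ 3), 0, (-t + t ^ 5) * (1 - q ^ 2 + q ^ 3), 0,
         q ^ 4 + (-t + t ^ 5) ^ 2 + (1 - q - q ^ 2 + q ^ 3) ^ 2, 0, 0;
       0, 0, 0, 0, 0, -q * (1 - q ^ 2), 0, q ^ 2 + (1 - q ^ 2) ^ 2, 0;
       0, 0, 0, 0, 0, 0, 0, 0, 1] := by
  rw [pow_two, R]
  ext i j
  fin_cases i <;> fin_cases j <;>
    simp [Matrix.mul_apply, Fin.sum_univ_succ] <;> ring

/-- vertex-model computation of the adjoint (3-colored) Jones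
polynomial of the trefoil knot (the closure of the two-strand braid `b₁³`): over
`K`, `q²·(1+q+q²)·Tr((h ⊗ h)·R³) = q²·(1 + q³ − q⁵ + q⁶ − q⁷ − q⁸ + q⁹)`,
the left-hand side being the Akutsu–Wadati invariant
`α(b₁³) = (ττ̄)^{−1/2}(τ̄/τ)^{3/2}·Tr((h⊗h)·R³)` with `τ = 1/(1+q+q²)`,
`τ̄ = q²/(1+q+q²)`. -/
theorem trefoil_adjoint_jones_nineteen_vertex :
    q ^ 2 * (1 + q + q ^ 2) * Matrix.trace (kron h h * R ^ 3) =
      q ^ 2 * (1 + q ^ 3 - q ^ 5 + q ^ 6 - q ^ 7 - q ^ 8 + q ^ 9) := by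
  have hs := one_add_q_add_q_sq_ne_zero
  have h_trace : Matrix.trace (kron h h * R ^ 3) = (1 + q + q ^ 2)⁻¹ ^ 2 *
      ((1 + q + q ^ 2) * (1 + q ^ 3 - q ^ 5 + q ^ 6 - q ^ 7 - q ^ 8 + q ^ 9)) := by
    rw [kron_h_h, pow_succ R 2, R_sq, R, Matrix.trace]
    simp only [Matrix.diag_apply, Matrix.diagonal_mul, Pi.smul_apply, smul_eq_mul, mul_assoc]
    rw [← Finset.mul_sum]
    congr 1
    simp [Matrix.mul_apply, Fin.sum_univ_succ]
    simp only [q]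
    ring
  rw [h_trace]
  field_simp
end
end
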